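/- Let n ∈ ℕ. For every x ∈ ℝ, lim_{α→∞} (2α)^{−n/2} L_n^{(−α)}(−√(2α)·x − α) = i^n H_n(ix) = (−1)^n Σ_{k=0}^{⌊n/2⌋} n!/(k!(n−2k)! 4^k) x^{n−2k}, the limit being taken along real α → +∞; here H_n(ix) denotes the monic Hermite polynomial evaluated at ix in ℂ, and i^n H_n(ix) is a real polynomial in x. -/

import Mathlib

open Finset Filter Topology

/-- Monic Laguerre polynomial `L_n^{(α)}(x)`. -/
noncomputable def lagP (n : ℕ) (α x : ℝ) : ℝ :=
  ∑ k ∈ Finset.range (n + 1),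
    (-1 : ℝ) ^ (n - k) * ((n.factorial : ℝ) / (k.factorial : ℝ)) *
      ((∏ j ∈ Finset.Icc (k + 1) n, (α + (j : ℝ))) / ((n - k).factorial : ℝ)) * x ^ k

/-- Pochhammer symbol `(a)_n = a (a+1) ⋯ (a+n−1)`. -/
noncomputable def poch (a : ℝ) (n : ℕ) : ℝ := ∏ j ∈ Finset.range n, (a + (j : ℝ))

/-- Monic Jacobi polynomial `P_n^{(α,β)}(x)`. -/
noncomputable def jacP (n : ℕ) (α β x : ℝ) : ℝ :=
  (2 ^ n * (n.factorial : ℝ) / poch ((n : ℝ) + α + β + 1) n) *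
    ∑ s ∈ Finset.range (n + 1),
      ((∏ j ∈ Finset.Icc (s + 1) n, (α + (j : ℝ))) / ((n - s).factorial : ℝ)) *
        ((∏ j ∈ Finset.Icc (n - s + 1) n, (β + (j : ℝ))) / (s.factorial : ℝ)) *
        ((x - 1) / 2) ^ s * ((x + 1) / 2) ^ (n - s)

/-- Monic Hermite polynomial, as a polynomial function on `ℂ`. -/
noncomputable def hermC (n : ℕ) (z : ℂ) : ℂ :=
  ∑ k ∈ Finset.range (n / 2 + 1),
    (-1 : ℂ) ^ k *
      ((n.factorial : ℂ) / ((k.factorial : ℂ) * ((n - 2 * k).factorial : ℂ) * 4 ^ k)) *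
      z ^ (n - 2 * k)

/-- Type I `X_m`-Laguerre exceptional orthogonal polynomial `L̂^{(I,m)}_n(x;α)`. -/
noncomputable def lagI (m n : ℕ) (α x : ℝ) : ℝ :=
  (-1 : ℝ) ^ m * (lagP m (α + 1) (-x) * lagP n α x
    - (n : ℝ) * lagP m α (-x) * lagP (n - 1) (α + 1) x)

/-- Type II `X_m`-Laguerre exceptional orthogonal polynomial `L̂^{(II,m)}_n(x;α)`. -/
noncomputable def lagII (m n : ℕ) (α x : ℝ) : ℝ :=
  (1 / (α + (n : ℝ) - (m : ℝ))) *
    ((n : ℝ) * x * lagP m (-α) x * lagP (n - 1) (α + 1) x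
      - ((m : ℝ) - α) * lagP m (-α - 1) x * lagP n α x)

/-- Type III `X_m`-Laguerre exceptional orthogonal polynomial `L̂^{(III,m)}_n(x;α)`. -/
noncomputable def lagIII (m n : ℕ) (α x : ℝ) : ℝ :=
  if n = 0 then 1 else
    (-1 : ℝ) ^ m * (lagP m (-α) (-x) * lagP (n - m) (α - 1) x
      - (m : ℝ) * x * lagP (m - 1) (-α + 1) (-x) * lagP (n - m - 1) α x)

/-- Type I `X_m`-Jacobi exceptional orthogonal polynomial `P̂^{(I,m)}_n(x;α,β)`. -/
noncomputable def jacI (m n : ℕ) (α β x : ℝ) : ℝ :=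
  (1 / (β + (n : ℝ) - (m : ℝ))) *
    (jacP m α (-β) x * ((n : ℝ) * (1 + x) * jacP (n - 1) (α + 1) (β + 1) x
        + β * jacP n α β x)
      - (m : ℝ) * (1 + x) * jacP (m - 1) (α + 1) (-β + 1) x * jacP n α β x)

/-- Type II `X_m`-Jacobi exceptional orthogonal polynomial `P̂^{(II,m)}_n(x;α,β)`. -/
noncomputable def jacII (m n : ℕ) (α β x : ℝ) : ℝ :=
  (1 / ((m : ℝ) - (n : ℝ) - α)) *
    (jacP m (-α) β x * ((n : ℝ) * (1 - x) * jacP (n - 1) (α + 1) (β + 1) x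
        - α * jacP n α β x)
      - (m : ℝ) * (1 - x) * jacP (m - 1) (-α + 1) (β + 1) x * jacP n α β x)

/-- Type III `X_m`-Jacobi exceptional orthogonal polynomial `P̂^{(III,m)}_n(x;α,β)`. -/
noncomputable def jacIII (m n : ℕ) (α β x : ℝ) : ℝ :=
  if n = 0 then 1 else
    (1 / (α + β + (n : ℝ) - 2 * (m : ℝ) - 1)) *
      ((α + β + (n : ℝ) - (m : ℝ) - 1) * jacP m (-α) (-β) x * jacP (n - m) (α - 1) (β - 1) x
        + (m : ℝ) * (1 - x ^ 2) * jacP (m - 1) (-α + 1) (-β + 1) x * jacP (n - m - 1) α β x)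

/-- Type III `X_m`-Hermite exceptional orthogonal polynomial `Ĥ^{(III,m)}_n(x)`
(a real polynomial, expressed via complex Hermite values). -/
noncomputable def hermIII (m n : ℕ) (x : ℝ) : ℂ :=
  if n = 0 then 1 else
    Complex.I ^ m * (hermC m (Complex.I * x) * hermC (n - m) (x : ℂ)
      + Complex.I * ((m : ℂ) / 2) * hermC (m - 1) (Complex.I * x) * hermC (n - m - 1) (x : ℂ))

/-!
Put `s = √(2α)`. The three-term recurrence of the Laguerre polynomials, rescaled to
`M_n = s⁻ⁿ L_n^{(-α)}(s y - α)`, reads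
`M_{n+2} = (y - (2n+3)/s) M_{n+1} + (n+1) (1/2 - (n+1)/s²) M_n`,
whose coefficients converge to those of the recurrence `h_{n+2} = y h_{n+1} + (n+1)/2 · h_n` of the
Hermite polynomials of variance `1/2`. The identity with `iⁿ H_n(ix)` is the homogeneity of
the Hermite polynomials in the argument (degree one) and the variance (degree two).
-/

section Laguerre

open Polynomial

theorem coeff_X_mul_derivative {R : Type*} [Semiring R] (p : R[X]) (k : ℕ) :
    (X * derivative p).coeff k = k * p.coeff k := by
  cases k with
  | zero => simp
  | succ k => rw [coeff_X_mul, coeff_derivative, ← Nat.cast_succ, Nat.cast_comm]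

variable {R : Type*} [CommRing R]

/-- The coefficient of `X ^ k` in the monic Laguerre polynomial of degree `n` with parameter `a`.
The sign is written `(-1) ^ (n + k)` to avoid truncated subtraction; for `n < k` the binomial
coefficient makes the value `0`. -/
def laguerreCoeff (a : R) (n k : ℕ) : R :=
  (-1) ^ (n + k) * n.choose k * ∏ j ∈ Icc (k + 1) n, (a + j)

/-- The monic Laguerre polynomial of degree `n` with parameter `a`, as a formal polynomial. -/
noncomputable def laguerre (a : R) (n : ℕ) : R[X] :=
  ∑ k ∈ range (n + 1), monomial k (laguerreCoeff a n k)

theorem laguerreCoeff_self (a : R) (n : ℕ) : laguerreCoeff a n n = 1 := by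
  simp [laguerreCoeff, Even.neg_one_pow ⟨n, rfl⟩]

theorem laguerreCoeff_eq_zero_of_lt (a : R) {n k : ℕ} (h : n < k) : laguerreCoeff a n k = 0 := by
  simp [laguerreCoeff, Nat.choose_eq_zero_of_lt h]

theorem laguerreCoeff_succ_zero (a : R) (n : ℕ) :
    laguerreCoeff a (n + 1) 0 = -(a + (n + 1)) * laguerreCoeff a n 0 := by
  simp only [laguerreCoeff, prod_Icc_succ_top (Nat.le_add_left (0 + 1) n), Nat.choose_zero_right]
  push_cast
  ring

theorem laguerreCoeff_succ_succ (a : R) (n k : ℕ) :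
    laguerreCoeff a (n + 1) (k + 1) =
      laguerreCoeff a n k - (a + (n + 1) + (k + 1)) * laguerreCoeff a n (k + 1) := by
  rcases lt_trichotomy n k with hnk | rfl | hkn
  · simp [laguerreCoeff_eq_zero_of_lt, hnk, hnk.trans (Nat.lt_succ_self k)]
  · simp [laguerreCoeff_self, laguerreCoeff_eq_zero_of_lt]
  · have pascal : ((n + 1).choose (k + 1) : R) = n.choose k + n.choose (k + 1) := by
      rw [Nat.choose_succ_succ', Nat.cast_add]
    have ratio : (n.choose (k + 1) * (k + 1) : R) = n.choose k * (n - k) := by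
      simpa [Nat.cast_sub hkn.le] using congrArg (Nat.cast : ℕ → R) (Nat.choose_succ_right_eq n k)
    have prod_top : ∏ j ∈ Icc (k + 1 + 1) (n + 1), (a + (j : R)) =
        (∏ j ∈ Icc (k + 1 + 1) n, (a + (j : R))) * (a + (n + 1)) := by
      rw [prod_Icc_succ_top (by omega), Nat.cast_succ]
    have prod_bot : ∏ j ∈ Icc (k + 1) n, (a + (j : R)) =
        (a + (k + 1)) * ∏ j ∈ Icc (k + 1 + 1) n, (a + (j : R)) := by
      rw [← mul_prod_Ioc_eq_prod_Icc hkn, ← Icc_add_one_left_eq_Ioc, Nat.cast_succ]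
    simp only [laguerreCoeff, pascal, prod_top, prod_bot]
    linear_combination (-1) ^ (n + k + 1) * (∏ j ∈ Icc (k + 1 + 1) n, (a + (j : R))) * ratio

theorem sub_mul_laguerreCoeff_succ (a : R) (n k : ℕ) :
    (k - (n + 1)) * laguerreCoeff a (n + 1) k =
      (n + 1) * (a + (n + 1)) * laguerreCoeff a n k := by
  rcases lt_trichotomy k (n + 1) with hkn | rfl | hnk
  · have ratio : (n.choose k * (n + 1) : R) = (n + 1).choose k * (n + 1 - k) := by
      simpa [Nat.cast_sub hkn.le] using congrArg (Nat.cast : ℕ → R) (Nat.choose_mul_succ_eq n k)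
    simp only [laguerreCoeff, prod_Icc_succ_top (Nat.succ_le_of_lt hkn)]
    push_cast
    linear_combination
      (-1) ^ (n + 1 + k) * (∏ j ∈ Icc (k + 1) n, (a + (j : R))) * (a + (n + 1)) * ratio
  · simp [laguerreCoeff_eq_zero_of_lt]
  · simp [laguerreCoeff_eq_zero_of_lt, hnk, (Nat.lt_succ_self n).trans hnk]

theorem coeff_laguerre (a : R) (n k : ℕ) : (laguerre a n).coeff k = laguerreCoeff a n k := by
  simp only [laguerre, finsetSum_coeff, coeff_monomial, sum_ite_eq', mem_range, ite_eq_left_iff]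
  exact fun h => (laguerreCoeff_eq_zero_of_lt a (by omega)).symm

theorem laguerre_zero (a : R) : laguerre a 0 = 1 := by
  simp [laguerre, laguerreCoeff_self]

theorem laguerre_succ (a : R) (n : ℕ) :
    laguerre a (n + 1) =
      (X - C (a + (n + 1))) * laguerre a n - X * derivative (laguerre a n) := by
  ext k
  rw [sub_mul, coeff_sub, coeff_sub, coeff_C_mul, coeff_X_mul_derivative]
  cases k with
  | zero =>
    simp only [mul_coeff_zero, coeff_X_zero, coeff_laguerre, laguerreCoeff_succ_zero]
    push_cast
    ring
  | succ k =>
    simp only [coeff_X_mul, coeff_laguerre, laguerreCoeff_succ_succ]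
    push_cast
    ring

theorem X_mul_derivative_laguerre_succ (a : R) (n : ℕ) :
    X * derivative (laguerre a (n + 1)) =
      C (n + 1 : R) * laguerre a (n + 1) + C ((n + 1) * (a + (n + 1))) * laguerre a n := by
  ext k
  simp only [coeff_X_mul_derivative, coeff_add, coeff_C_mul, coeff_laguerre]
  linear_combination sub_mul_laguerreCoeff_succ a n k

theorem laguerre_add_two (a : R) (n : ℕ) :
    laguerre a (n + 2) =
      (X - C (a + (2 * n + 3))) * laguerre a (n + 1)
        - C ((n + 1) * (a + (n + 1))) * laguerre a n := by
  rw [laguerre_succ, X_mul_derivative_laguerre_succ]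
  simp only [map_add, map_mul, map_natCast, map_one, map_ofNat]
  push_cast
  ring

theorem eval_laguerre (n : ℕ) (a y : ℝ) : (laguerre a n).eval y = lagP n a y := by
  rw [laguerre, eval_finsetSum, lagP]
  refine sum_congr rfl fun k hk => ?_
  obtain ⟨d, rfl⟩ := Nat.exists_eq_add_of_le (mem_range_succ_iff.mp hk)
  have sign : (-1 : ℝ) ^ (k + d + k) = (-1) ^ d := by
    rw [add_right_comm, pow_add, Even.neg_one_pow ⟨k, rfl⟩, one_mul]
  rw [eval_monomial, laguerreCoeff, sign, Nat.cast_add_choose, Nat.add_sub_cancel_left]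
  field_simp

theorem lagP_zero (a y : ℝ) : lagP 0 a y = 1 := by
  rw [← eval_laguerre, laguerre_zero, eval_one]

theorem lagP_one (a y : ℝ) : lagP 1 a y = y - (a + 1) := by
  simp [← eval_laguerre, laguerre_succ, laguerre_zero]

theorem lagP_add_two (n : ℕ) (a y : ℝ) :
    lagP (n + 2) a y =
      (y - (a + (2 * n + 3))) * lagP (n + 1) a y - (n + 1) * (a + (n + 1)) * lagP n a y := by
  simp only [← eval_laguerre, laguerre_add_two, eval_sub, eval_mul, eval_X, eval_C]

end Laguerre

section Hermite

open scoped Nat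

/-- The monic Hermite polynomial of degree `n` and variance `v`, evaluated at `x`: for real `v ≥ 0`
it is the `n`-th moment of a Gaussian variable with mean `x` and variance `v`. The polynomial
`H_n` (`hermC`) has variance `-1/2`, and its rotation `iⁿ H_n(ix)` has variance `1/2`.
At `k = 0` the factor `(2 * k - 1)‼` is `0‼ = 1`. -/
def hermiteWithVariance {R : Type*} [CommSemiring R] (v x : R) (n : ℕ) : R :=
  ∑ k ∈ range (n / 2 + 1), (n.choose (2 * k) * (2 * k - 1)‼ : ℕ) * v ^ k * x ^ (n - 2 * k)

section CommSemiring

variable {R : Type*} [CommSemiring R]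

theorem hermiteWithVariance_eq_sum_range (v x : R) {n N : ℕ} (hN : n / 2 < N) :
    hermiteWithVariance v x n =
      ∑ k ∈ range N, (n.choose (2 * k) * (2 * k - 1)‼ : ℕ) * v ^ k * x ^ (n - 2 * k) := by
  refine sum_subset (range_subset_range.mpr hN) fun k _ hk => ?_
  have hnk : n < 2 * k := by rw [mem_range] at hk; omega
  simp [Nat.choose_eq_zero_of_lt hnk]

theorem choose_add_two_mul_doubleFactorial (n k : ℕ) :
    (n + 2).choose (2 * (k + 1)) * (2 * (k + 1) - 1)‼ =
      (n + 1).choose (2 * (k + 1)) * (2 * (k + 1) - 1)‼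
        + (n + 1) * (n.choose (2 * k) * (2 * k - 1)‼) := by
  have absorb := Nat.add_one_mul_choose_eq n (2 * k)
  rw [show 2 * (k + 1) = 2 * k + 1 + 1 by ring, Nat.choose_succ_succ' (n + 1), Nat.add_sub_cancel,
    Nat.doubleFactorial_add_one]
  linear_combination (2 * k - 1)‼ * absorb.symm

theorem choose_mul_pow_succ (x : R) (n k : ℕ) :
    (n.choose (k + 1) : R) * x ^ (n - k) = x * (n.choose (k + 1) * x ^ (n - (k + 1))) := by
  rcases Nat.lt_or_ge n (k + 1) with hnk | hkn
  · simp [Nat.choose_eq_zero_of_lt hnk]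
  · rw [show n - k = n - (k + 1) + 1 by omega, pow_succ]
    ring

theorem hermiteWithVariance_add_two (v x : R) (n : ℕ) :
    hermiteWithVariance v x (n + 2) =
      x * hermiteWithVariance v x (n + 1) + (n + 1) * v * hermiteWithVariance v x n := by
  rw [hermiteWithVariance_eq_sum_range v x (show (n + 2) / 2 < n + 2 by omega),
    hermiteWithVariance_eq_sum_range v x (show (n + 1) / 2 < n + 2 by omega),
    hermiteWithVariance_eq_sum_range v x (show n / 2 < n + 1 by omega),
    sum_range_succ', sum_range_succ' _ (n + 1), mul_add, mul_sum, mul_sum, add_right_comm,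
    ← sum_add_distrib]
  congr 1
  · refine sum_congr rfl fun k _ => ?_
    have shift : ((n + 1).choose (2 * (k + 1)) : R) * x ^ (n - 2 * k) =
        x * ((n + 1).choose (2 * (k + 1)) * x ^ (n + 1 - 2 * (k + 1))) := by
      rw [← Nat.add_sub_add_right n 1]
      exact choose_mul_pow_succ x (n + 1) (2 * k + 1)
    rw [choose_add_two_mul_doubleFactorial, show n + 2 - 2 * (k + 1) = n - 2 * k by omega]
    push_cast
    calc
      _ = (2 * (k + 1) - 1)‼ * v ^ (k + 1) * ((n + 1).choose (2 * (k + 1)) * x ^ (n - 2 * k))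
          + (n + 1) * v * (n.choose (2 * k) * (2 * k - 1)‼ * v ^ k * x ^ (n - 2 * k)) := by ring
      _ = _ := by rw [shift]; ring
  · simp [pow_succ']

theorem pow_mul_hermiteWithVariance (c v x : R) (n : ℕ) :
    c ^ n * hermiteWithVariance v x n = hermiteWithVariance (c ^ 2 * v) (c * x) n := by
  rw [hermiteWithVariance, hermiteWithVariance, mul_sum]
  refine sum_congr rfl fun k hk => ?_
  obtain ⟨d, rfl⟩ := Nat.exists_eq_add_of_le (show 2 * k ≤ n by rw [mem_range] at hk; omega)
  rw [Nat.add_sub_cancel_left]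
  ring

theorem map_hermiteWithVariance {S : Type*} [CommSemiring S] (f : R →+* S) (v x : R) (n : ℕ) :
    f (hermiteWithVariance v x n) = hermiteWithVariance (f v) (f x) n := by
  simp [hermiteWithVariance]

end CommSemiring

theorem factorial_two_mul (k : ℕ) : (2 * k)! = 2 ^ k * k ! * (2 * k - 1)‼ := by
  cases k with
  | zero => rfl
  | succ k =>
    rw [← Nat.doubleFactorial_two_mul]
    exact Nat.factorial_eq_mul_doubleFactorial (2 * k + 1)

theorem hermiteWithVariance_eq_sum_factorial {K : Type*} [Field K] [CharZero K]
    (v x : K) (n : ℕ) :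
    hermiteWithVariance v x n =
      ∑ k ∈ range (n / 2 + 1), (2 * v) ^ k * (n ! / (k ! * (n - 2 * k)! * 4 ^ k)) *
        x ^ (n - 2 * k) := by
  refine sum_congr rfl fun k hk => ?_
  obtain ⟨d, rfl⟩ := Nat.exists_eq_add_of_le (show 2 * k ≤ n by rw [mem_range] at hk; omega)
  have four_pow : (4 : K) ^ k = 2 ^ k * 2 ^ k := by rw [← mul_pow]; norm_num
  have factorial_two_mul_cast : ((2 * k)! : K) = 2 ^ k * k ! * (2 * k - 1)‼ := by
    exact_mod_cast factorial_two_mul k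
  have : ((2 * k - 1)‼ : K) ≠ 0 := by exact_mod_cast (Nat.doubleFactorial_pos _).ne'
  rw [Nat.cast_mul, Nat.cast_add_choose, Nat.add_sub_cancel_left, factorial_two_mul_cast, four_pow,
    mul_pow]
  field_simp

theorem hermC_eq_hermiteWithVariance (n : ℕ) (z : ℂ) :
    hermC n z = hermiteWithVariance (-1 / 2) z n := by
  rw [hermiteWithVariance_eq_sum_factorial, mul_div_cancel₀ _ two_ne_zero, hermC]

end Hermite

theorem tendsto_lagP_div_pow {ι : Type*} {l : Filter ι} {s a : ι → ℝ} {v : ℝ}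
    (hs : Tendsto s l atTop) (ha : Tendsto (fun i => a i / s i ^ 2) l (𝓝 (-v))) (y : ℝ) (n : ℕ) :
    Tendsto (fun i => lagP n (a i) (s i * y + a i) / s i ^ n) l
      (𝓝 (hermiteWithVariance v y n)) := by
  have hinv : Tendsto (fun i => (s i)⁻¹) l (𝓝 0) := tendsto_inv_atTop_zero.comp hs
  have hs0 : ∀ᶠ i in l, s i ≠ 0 := hs.eventually_ne_atTop 0
  induction n using Nat.twoStepInduction with
  | zero => simpa [lagP_zero, hermiteWithVariance] using tendsto_const_nhds
  | one =>
    have limit : Tendsto (fun i => y - (s i)⁻¹) l (𝓝 (hermiteWithVariance v y 1)) := by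
      simpa [hermiteWithVariance] using hinv.const_sub y
    refine limit.congr' ?_
    filter_upwards [hs0] with i hi
    rw [lagP_one]
    field_simp
    ring
  | more n ih ih' =>
    have limit : Tendsto (fun i =>
        (y - (2 * n + 3) * (s i)⁻¹) * (lagP (n + 1) (a i) (s i * y + a i) / s i ^ (n + 1))
          - (n + 1) * (a i / s i ^ 2 + (n + 1) * (s i)⁻¹ ^ 2)
            * (lagP n (a i) (s i * y + a i) / s i ^ n))
        l (𝓝 (hermiteWithVariance v y (n + 2))) := by
      convert (((hinv.const_mul (2 * n + 3 : ℝ)).const_sub y).mul ih').sub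
        (((ha.add ((hinv.pow 2).const_mul (n + 1 : ℝ))).const_mul (n + 1 : ℝ)).mul ih) using 2
      rw [hermiteWithVariance_add_two]
      ring
    refine limit.congr' ?_
    filter_upwards [hs0] with i hi
    rw [lagP_add_two]
    field_simp
    ring

theorem stmt18 (n : ℕ) (x : ℝ) :
    Filter.Tendsto
        (fun α : ℝ => (2 * α) ^ (-(n : ℝ) / 2) * lagP n (-α) (-(Real.sqrt (2 * α) * x) - α))
        Filter.atTop
        (nhds ((-1 : ℝ) ^ n * ∑ k ∈ Finset.range (n / 2 + 1),
          (n.factorial : ℝ) / ((k.factorial : ℝ) * ((n - 2 * k).factorial : ℝ) * 4 ^ k)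
            * x ^ (n - 2 * k))) ∧
      (((-1 : ℝ) ^ n * ∑ k ∈ Finset.range (n / 2 + 1),
          (n.factorial : ℝ) / ((k.factorial : ℝ) * ((n - 2 * k).factorial : ℝ) * 4 ^ k)
            * x ^ (n - 2 * k) : ℝ) : ℂ)
        = Complex.I ^ n * hermC n (Complex.I * x) := by
  have real_sum : ∑ k ∈ Finset.range (n / 2 + 1),
      (n.factorial : ℝ) / ((k.factorial : ℝ) * ((n - 2 * k).factorial : ℝ) * 4 ^ k)
        * x ^ (n - 2 * k) = hermiteWithVariance (1 / 2) x n := by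
    simp [hermiteWithVariance_eq_sum_factorial]
  rw [real_sum, pow_mul_hermiteWithVariance, neg_one_sq, one_mul]
  constructor
  · have hs : Tendsto (fun α : ℝ => √(2 * α)) atTop atTop :=
      Real.tendsto_sqrt_atTop.comp (tendsto_id.const_mul_atTop two_pos)
    have ha : Tendsto (fun α : ℝ => -α / √(2 * α) ^ 2) atTop (𝓝 (-(1 / 2))) := by
      refine tendsto_const_nhds.congr' ?_
      filter_upwards [eventually_gt_atTop 0] with α hα
      rw [Real.sq_sqrt (by positivity)]
      field_simp
    refine (tendsto_lagP_div_pow hs ha (-1 * x) n).congr' ?_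
    filter_upwards [eventually_ge_atTop 0] with α hα
    rw [Real.rpow_div_two_eq_sqrt _ (by positivity), Real.rpow_neg (Real.sqrt_nonneg _),
      Real.rpow_natCast, div_eq_inv_mul]
    ring_nf
  · rw [hermC_eq_hermiteWithVariance, pow_mul_hermiteWithVariance,
      ← Complex.ofRealHom_eq_coe, map_hermiteWithVariance]
    simp [← mul_assoc, neg_div]
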